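/- Let s ≥ 4. The extended code of C_{(2,n,5,1)} has length n+1, dimension n − 8s, and minimum distance exactly 6, and it is distance-optimal with respect to the sphere packing bound: every binary linear code of length n+1 and dimension n − 8s has minimum distance at most 6. -/

import Mathlib

open Finset

/-- The binary cyclic (BCH-type) code of length `n` over GF(2), consisting of all
words `c` such that `∑ i, c i • β ^ (j * i) = 0` for every `j` in the check set `J`. -/
def BCHCode {F : Type} [Field F] [Algebra (ZMod 2) F] (n : ℕ) (β : F) (J : Finset ℕ) :
    Submodule (ZMod 2) (Fin n → ZMod 2) where
  carrier := {c | ∀ j ∈ J, ∑ i : Fin n, c i • β ^ (j * (i : ℕ)) = 0}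
  add_mem' := by
    intro a b ha hb j hj
    simp only [Set.mem_setOf_eq, Pi.add_apply, add_smul, Finset.sum_add_distrib] at *
    rw [ha j hj, hb j hj, add_zero]
  zero_mem' := by
    intro j hj
    simp
  smul_mem' := by
    intro r c hc j hj
    simp only [Set.mem_setOf_eq, Pi.smul_apply, smul_assoc, ← Finset.smul_sum] at *
    rw [hc j hj, smul_zero]

/-- The (Euclidean) dual of a binary linear code. -/
def dualCode {N : ℕ} (C : Submodule (ZMod 2) (Fin N → ZMod 2)) :
    Submodule (ZMod 2) (Fin N → ZMod 2) where
  carrier := {b | ∀ c ∈ C, ∑ i, b i * c i = 0}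
  add_mem' := by
    intro a b ha hb c hc
    simp only [Set.mem_setOf_eq, Pi.add_apply, add_mul, Finset.sum_add_distrib] at *
    rw [ha c hc, hb c hc, add_zero]
  zero_mem' := by
    intro c hc
    simp
  smul_mem' := by
    intro r b hb c hc
    simp only [Set.mem_setOf_eq, Pi.smul_apply, smul_eq_mul, mul_assoc, ← Finset.mul_sum] at *
    rw [hb c hc, mul_zero]

/-- The linear map appending an overall parity-check coordinate. -/
def extendMap (N : ℕ) : (Fin N → ZMod 2) →ₗ[ZMod 2] (Fin (N + 1) → ZMod 2) where
  toFun c := fun j => if h : (j : ℕ) < N then c ⟨j, h⟩ else ∑ i, c i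
  map_add' a b := by
    funext j
    by_cases h : (j : ℕ) < N <;> simp [h, Finset.sum_add_distrib]
  map_smul' r c := by
    funext j
    by_cases h : (j : ℕ) < N <;> simp [h, Finset.mul_sum]

/-- The extended code of a binary linear code. -/
def extendedCode {N : ℕ} (C : Submodule (ZMod 2) (Fin N → ZMod 2)) :
    Submodule (ZMod 2) (Fin (N + 1) → ZMod 2) :=
  C.map (extendMap N)

/-- The minimum distance (= minimum nonzero Hamming weight) of a binary linear code. -/
noncomputable def minDist {N : ℕ} (C : Submodule (ZMod 2) (Fin N → ZMod 2)) : ℕ :=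
  sInf {w | ∃ c ∈ C, c ≠ 0 ∧ hammingNorm c = w}

/-- The number of codewords of Hamming weight `w` in a binary linear code. -/
noncomputable def weightCount {N : ℕ} (C : Submodule (ZMod 2) (Fin N → ZMod 2)) (w : ℕ) : ℕ :=
  Set.ncard {c : Fin N → ZMod 2 | c ∈ C ∧ hammingNorm c = w}

/-- The 2-cyclotomic coset of `i` modulo `n`. -/
def cycCoset (n i : ℕ) : Set ℕ := {x | ∃ j : ℕ, x = i * 2 ^ j % n}

/-- The coset leader (smallest element) of the 2-cyclotomic coset of `i` modulo `n`. -/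
noncomputable def cosetLeader (n i : ℕ) : ℕ := sInf (cycCoset n i)

/-!
Identify a word `c` with the polynomial `∑ i, c i X ^ i`. The BCH code is then the set of multiples
of the minimal polynomials of `β` and `β ^ 3`. By the theory of cyclotomic cosets both have degree
`4 s`, the order of `2` modulo `n`, and they are distinct because `3` is not a power of `2` modulo
`2 ^ (2 s) + 1`; this gives the dimension. Over GF(2) a polynomial vanishing at `x` vanishes at
`x ^ 2`, so codewords vanish at `β, β ^ 2, β ^ 3, β ^ 4` and the BCH bound yields distance at
least `5`, which a parity bit raises to `6`. Conversely the balls of radius `3` cannot be disjoint,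
since already the words of weight `3` outnumber the cosets of a code of these parameters.
-/

open Polynomial

section MinDist

variable {N : ℕ} {C : Submodule (ZMod 2) (Fin N → ZMod 2)}

theorem minDist_le_hammingNorm {c : Fin N → ZMod 2} (hc : c ∈ C) (hc0 : c ≠ 0) :
    minDist C ≤ hammingNorm c :=
  Nat.sInf_le ⟨c, hc, hc0, rfl⟩

theorem le_minDist {d : ℕ} (hC : C ≠ ⊥) (h : ∀ c ∈ C, c ≠ 0 → d ≤ hammingNorm c) :
    d ≤ minDist C := by
  obtain ⟨c, hc, hc0⟩ := Submodule.exists_mem_ne_zero_of_ne_bot hC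
  refine le_csInf (s := {w | ∃ c ∈ C, c ≠ 0 ∧ hammingNorm c = w}) ⟨_, c, hc, hc0, rfl⟩ ?_
  rintro _ ⟨x, hx, hx0, rfl⟩
  exact h x hx hx0

end MinDist

section SpherePacking

variable {ι : Type*} [Fintype ι] [DecidableEq ι]

theorem card_filter_hammingNorm_eq (w : ℕ) :
    #{v : ι → ZMod 2 | hammingNorm v = w} = (Fintype.card ι).choose w := by
  have eq_one_of_ne_zero : ∀ a : ZMod 2, a ≠ 0 → a = 1 := by decide
  rw [← Finset.card_univ, ← Finset.card_powersetCard]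
  refine Finset.card_bij' (fun v _ ↦ ({i | v i ≠ 0} : Finset ι))
    (fun S _ i ↦ if i ∈ S then 1 else 0) ?_ ?_ ?_ ?_
  · intro v hv
    simpa [Finset.mem_powersetCard, hammingNorm] using hv
  · intro S hS
    simpa [Finset.mem_powersetCard, hammingNorm] using hS
  · intro v _
    ext1 i
    by_cases hi : v i = 0
    · simp [hi]
    · simp [eq_one_of_ne_zero _ hi]
  · intro S _
    ext i
    simp

theorem card_filter_hammingNorm_le (t : ℕ) :
    #{v : ι → ZMod 2 | hammingNorm v ≤ t} = ∑ w ∈ range (t + 1), (Fintype.card ι).choose w := by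
  rw [Finset.card_eq_sum_card_fiberwise (f := hammingNorm) (t := range (t + 1))
    fun v hv ↦ by simpa [Nat.lt_succ_iff] using hv]
  refine Finset.sum_congr rfl fun w hw ↦ ?_
  rw [← card_filter_hammingNorm_eq, Finset.filter_filter]
  congr! 2 with v
  have := Finset.mem_range_succ_iff.mp hw
  grind

theorem sphere_packing_bound {N t : ℕ} (D : Submodule (ZMod 2) (Fin N → ZMod 2))
    (h : 2 ^ (N - Module.finrank (ZMod 2) D) < ∑ w ∈ range (t + 1), N.choose w) :
    minDist D ≤ 2 * t := by
  classical
  have card_quotient : Nat.card ((Fin N → ZMod 2) ⧸ D) = 2 ^ (N - Module.finrank (ZMod 2) D) := by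
    rw [Module.natCard_eq_pow_finrank (K := ZMod 2), Submodule.finrank_quotient]
    simp
  have : Finite ((Fin N → ZMod 2) ⧸ D) := Module.finite_of_finite (ZMod 2)
  have := Fintype.ofFinite ((Fin N → ZMod 2) ⧸ D)
  obtain ⟨x, hx, y, hy, hxy, hD⟩ := Finset.exists_ne_map_eq_of_card_lt_of_maps_to
    (s := {v : Fin N → ZMod 2 | hammingNorm v ≤ t}) (t := Finset.univ) (f := D.mkQ)
    (by rwa [card_filter_hammingNorm_le, Finset.card_univ, Fintype.card_fin,
      ← Nat.card_eq_fintype_card, card_quotient])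
    fun _ _ ↦ Finset.mem_univ _
  rw [Finset.mem_filter_univ] at hx hy
  have sub_mem : -x + y ∈ D := (QuotientAddGroup.eq (s := D.toAddSubgroup)).mp hD
  calc minDist D ≤ hammingNorm (-x + y) :=
        minDist_le_hammingNorm sub_mem (by rwa [ne_eq, neg_add_eq_zero])
    _ = hammingDist x y := (hammingDist_eq_hammingNorm x y).symm
    _ ≤ hammingDist x 0 + hammingDist 0 y := hammingDist_triangle x 0 y
    _ = hammingNorm x + hammingNorm y := by rw [hammingDist_zero_right, hammingDist_zero_left]
    _ ≤ 2 * t := by omega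

end SpherePacking

section ExtendedCode

variable {N : ℕ}

theorem extendMap_eq_snoc (c : Fin N → ZMod 2) :
    extendMap N c = Fin.snoc (α := fun _ ↦ ZMod 2) c (∑ i, c i) :=
  rfl

theorem extendMap_injective (N : ℕ) : Function.Injective (extendMap N) := fun a b h ↦ by
  rw [extendMap_eq_snoc, extendMap_eq_snoc] at h
  exact (Fin.snoc_inj.mp h).1

theorem finrank_extendedCode (C : Submodule (ZMod 2) (Fin N → ZMod 2)) :
    Module.finrank (ZMod 2) (extendedCode C) = Module.finrank (ZMod 2) C :=
  (C.equivMapOfInjective _ (extendMap_injective N)).finrank_eq.symm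

theorem extendedCode_ne_bot {C : Submodule (ZMod 2) (Fin N → ZMod 2)} (hC : C ≠ ⊥) :
    extendedCode C ≠ ⊥ := by
  rw [extendedCode, ← Submodule.map_bot (extendMap N)]
  exact (Submodule.map_injective_of_injective (extendMap_injective N)).ne hC

theorem sum_eq_natCast_hammingNorm {ι : Type*} [Fintype ι] (v : ι → ZMod 2) :
    ∑ i, v i = (hammingNorm v : ZMod 2) := by
  have eq_ite : ∀ a : ZMod 2, a = if a ≠ 0 then 1 else 0 := by decide
  rw [hammingNorm, Finset.natCast_card_filter]
  exact Finset.sum_congr rfl fun i _ ↦ eq_ite (v i)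

theorem even_hammingNorm_extendMap (c : Fin N → ZMod 2) : Even (hammingNorm (extendMap N c)) := by
  rw [← ZMod.natCast_eq_zero_iff_even, ← sum_eq_natCast_hammingNorm, extendMap_eq_snoc,
    Fin.sum_snoc, CharTwo.add_self_eq_zero]

theorem hammingNorm_le_hammingNorm_extendMap (c : Fin N → ZMod 2) :
    hammingNorm c ≤ hammingNorm (extendMap N c) := by
  rw [hammingNorm, hammingNorm, ← Finset.card_map Fin.castSuccEmb]
  refine Finset.card_le_card fun j hj ↦ ?_
  obtain ⟨i, hi, rfl⟩ := Finset.mem_map.mp hj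
  rw [Finset.mem_filter_univ] at hi ⊢
  simpa [extendMap_eq_snoc] using hi

theorem succ_le_minDist_extendedCode {C : Submodule (ZMod 2) (Fin N → ZMod 2)} {d : ℕ}
    (hC : C ≠ ⊥) (hd : Odd d) (h : d ≤ minDist C) : d + 1 ≤ minDist (extendedCode C) := by
  refine le_minDist (extendedCode_ne_bot hC) ?_
  rintro _ ⟨c, hc, rfl⟩ hc0
  have hle : d ≤ hammingNorm (extendMap N c) :=
    (h.trans (minDist_le_hammingNorm hc fun h0 ↦ hc0 (by rw [h0, map_zero]))).trans
      (hammingNorm_le_hammingNorm_extendMap c)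
  have heven := even_hammingNorm_extendMap c
  grind

end ExtendedCode

section PolynomialCode

variable {K : Type*} [Field K] [DecidableEq K]

/-- The polynomial code of length `n` with generator polynomial `g`: the words `c` for which `g`
divides `∑ i, c i X ^ i`. It is cyclic when `g` divides `X ^ n - 1`. -/
noncomputable def polynomialCode (n : ℕ) (g : K[X]) : Submodule K (Fin n → K) :=
  ((Ideal.span {g}).restrictScalars K).comap (ofFn n)

theorem mem_polynomialCode {n : ℕ} {g : K[X]} {c : Fin n → K} :
    c ∈ polynomialCode n g ↔ g ∣ ofFn n c :=
  Ideal.mem_span_singleton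

theorem finrank_polynomialCode_add_natDegree {n : ℕ} {g : K[X]} (hg : g ≠ 0)
    (hgn : g.natDegree ≤ n) :
    Module.finrank K (polynomialCode n g) + g.natDegree = n := by
  let residue : (Fin n → K) →ₗ[K] K[X] ⧸ Ideal.span {g} :=
    (Ideal.Quotient.mkₐ K (Ideal.span {g})).toLinearMap ∘ₗ ofFn n
  have ker_residue : LinearMap.ker residue = polynomialCode n g := by
    ext c
    simp [residue, mem_polynomialCode, Ideal.Quotient.eq_zero_iff_dvd]
  have residue_surjective : Function.Surjective residue := by
    intro y
    obtain ⟨f, rfl⟩ := Ideal.Quotient.mk_surjective y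
    have ofFn_mod : ofFn n (toFn n (f % g)) = f % g := by
      ext i
      by_cases hi : i < n
      · simp [hi, toFn]
      · have : (f % g).degree < i :=
          (EuclideanDomain.mod_lt f hg).trans_le (degree_le_of_natDegree_le (by omega))
        rw [ofFn_coeff_eq_zero_of_ge _ (by omega), coeff_eq_zero_of_degree_lt this]
    refine ⟨toFn n (f % g), ?_⟩
    simp only [residue, LinearMap.comp_apply, ofFn_mod]
    refine Ideal.Quotient.eq.mpr (Ideal.mem_span_singleton.mpr ?_)
    exact ⟨-(f / g), by linear_combination EuclideanDomain.div_add_mod f g⟩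
  have rank_nullity := residue.finrank_range_add_finrank_ker
  rw [LinearMap.range_eq_top.mpr residue_surjective, finrank_top, ker_residue,
    finrank_quotient_span_eq_natDegree, Module.finrank_fin_fun] at rank_nullity
  omega

theorem aeval_ofFn {A : Type*} [Ring A] [Algebra K A] {n : ℕ} (c : Fin n → K) (x : A) :
    aeval x (ofFn n c) = ∑ i : Fin n, c i • x ^ (i : ℕ) := by
  simp [ofFn_eq_sum_monomial, aeval_monomial, Algebra.smul_def]

end PolynomialCode

section BCHCode

variable {F : Type} [Field F] [Algebra (ZMod 2) F] {n : ℕ} {β : F}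

theorem mem_BCHCode {J : Finset ℕ} {c : Fin n → ZMod 2} :
    c ∈ BCHCode n β J ↔ ∀ j ∈ J, aeval (β ^ j) (ofFn n c) = 0 := by
  simp only [aeval_ofFn, ← pow_mul]
  rfl

theorem pairwise_isCoprime_minpoly {K L : Type*} [Field K] [Field L] [Algebra K L]
    {J : Finset ℕ} {β : L} (hβ : IsIntegral K β)
    (hJ : Set.InjOn (fun j ↦ minpoly K (β ^ j)) J) :
    (J : Set ℕ).Pairwise (Function.onFun IsCoprime fun j ↦ minpoly K (β ^ j)) := by
  intro i hi j hj hij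
  have hi_int := hβ.pow i
  have hj_int := hβ.pow j
  rw [Function.onFun, (minpoly.irreducible hi_int).coprime_iff_not_dvd]
  intro hdvd
  refine hij (hJ hi hj ?_)
  exact eq_of_monic_of_associated (minpoly.monic hi_int) (minpoly.monic hj_int)
    ((minpoly.irreducible hi_int).associated_of_dvd (minpoly.irreducible hj_int) hdvd)

theorem BCHCode_eq_polynomialCode {J : Finset ℕ} (hβ : IsIntegral (ZMod 2) β)
    (hJ : Set.InjOn (fun j ↦ minpoly (ZMod 2) (β ^ j)) J) :
    BCHCode n β J = polynomialCode n (∏ j ∈ J, minpoly (ZMod 2) (β ^ j)) := by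
  ext c
  rw [mem_BCHCode, mem_polynomialCode]
  refine ⟨fun h ↦ ?_, fun h j hj ↦ ?_⟩
  · exact Finset.prod_dvd_of_coprime (pairwise_isCoprime_minpoly hβ hJ)
      fun j hj ↦ minpoly.dvd _ _ (h j hj)
  · exact minpoly.dvd_iff.mp
      ((Finset.dvd_prod_of_mem (fun j ↦ minpoly (ZMod 2) (β ^ j)) hj).trans h)

theorem finrank_BCHCode_add_sum_natDegree_minpoly {J : Finset ℕ} (hn : n ≠ 0) (hβ : β ^ n = 1)
    (hJ : Set.InjOn (fun j ↦ minpoly (ZMod 2) (β ^ j)) J) :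
    Module.finrank (ZMod 2) (BCHCode n β J) + ∑ j ∈ J, (minpoly (ZMod 2) (β ^ j)).natDegree
      = n := by
  have hint : IsIntegral (ZMod 2) β := .of_pow (Nat.pos_of_ne_zero hn) (hβ ▸ isIntegral_one)
  have hmonic : ∀ j ∈ J, (minpoly (ZMod 2) (β ^ j)).Monic := fun j _ ↦ minpoly.monic (hint.pow j)
  have hdvd : ∏ j ∈ J, minpoly (ZMod 2) (β ^ j) ∣ X ^ n - 1 := by
    refine Finset.prod_dvd_of_coprime (pairwise_isCoprime_minpoly hint hJ)
      fun j _ ↦ minpoly.dvd _ _ ?_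
    have hβj : (β ^ j) ^ n = 1 := by rw [pow_right_comm, hβ, one_pow]
    simp [hβj]
  rw [BCHCode_eq_polynomialCode hint hJ, ← natDegree_prod_of_monic _ _ hmonic]
  refine finrank_polynomialCode_add_natDegree (monic_prod_of_monic _ _ hmonic).ne_zero ?_
  exact (natDegree_le_of_dvd hdvd (X_pow_sub_C_ne_zero (Nat.pos_of_ne_zero hn) 1)).trans_eq
    (natDegree_X_pow_sub_C (r := (1 : ZMod 2)))

theorem eq_zero_of_card_le_of_forall_sum_mul_pow_eq_zero {R ι : Type*} [CommRing R] [IsDomain R]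
    {S : Finset ι} {x v : ι → R} {m : ℕ} (hx : Set.InjOn x S) (hS : #S ≤ m)
    (h : ∀ j < m, ∑ i ∈ S, v i * x i ^ j = 0) {i : ι} (hi : i ∈ S) : v i = 0 := by
  let e := S.equivFin.symm
  have hinj : Function.Injective fun k ↦ x (e k) :=
    fun k l hkl ↦ e.injective (Subtype.ext (hx (e k).2 (e l).2 hkl))
  have hzero := Matrix.eq_zero_of_forall_pow_sum_mul_pow_eq_zero (v := fun k ↦ v (e k)) hinj
    fun j ↦ by
      rw [← h j (j.2.trans_le hS), ← Finset.sum_coe_sort S]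
      exact e.sum_comp fun i ↦ v i * x i ^ (j : ℕ)
  simpa [e] using congrFun hzero (e.symm ⟨i, hi⟩)

theorem lt_hammingNorm_of_mem_BCHCode_Ico {b m : ℕ} (hβ : n ≤ orderOf β) {c : Fin n → ZMod 2}
    (hc : c ∈ BCHCode n β (Ico b (b + m))) (hc0 : c ≠ 0) : m < hammingNorm c := by
  by_contra! hle
  obtain ⟨i₀, hi₀⟩ := Function.ne_iff.mp hc0
  have hβ0 : β ≠ 0 := (orderOf_pos_iff.mp (i₀.pos.trans_le hβ)).isUnit.ne_zero
  have hinj : Set.InjOn (fun i : Fin n ↦ β ^ (i : ℕ)) ({i | c i ≠ 0} : Finset (Fin n)) :=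
    fun i _ j _ hij ↦ Fin.ext
      (pow_injOn_Iio_orderOf (i.2.trans_le hβ) (j.2.trans_le hβ) hij)
  have hsum : ∀ j < m, ∑ i with c i ≠ 0,
      (algebraMap (ZMod 2) F (c i) * β ^ (b * (i : ℕ))) * (β ^ (i : ℕ)) ^ j = 0 := by
    intro j hj
    rw [← mem_BCHCode.mp hc (b + j) (Finset.mem_Ico.mpr ⟨by omega, by omega⟩), aeval_ofFn,
      Finset.sum_filter]
    refine Finset.sum_congr rfl fun i _ ↦ ?_
    by_cases hi : c i = 0
    · simp [hi]
    · rw [if_pos hi, Algebra.smul_def]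
      ring
  have hcoeff : algebraMap (ZMod 2) F (c i₀) * β ^ (b * (i₀ : ℕ)) = 0 :=
    eq_zero_of_card_le_of_forall_sum_mul_pow_eq_zero hinj hle hsum
      ((Finset.mem_filter_univ i₀).mpr hi₀)
  exact hi₀ (by simpa [hβ0] using hcoeff)

theorem lt_minDist_BCHCode_Ico {b m : ℕ} (hβ : n ≤ orderOf β)
    (hC : BCHCode n β (Ico b (b + m)) ≠ ⊥) : m < minDist (BCHCode n β (Ico b (b + m))) :=
  le_minDist hC fun _ hc hc0 ↦ lt_hammingNorm_of_mem_BCHCode_Ico hβ hc hc0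

theorem aeval_pow_prime {p : ℕ} [Fact p.Prime] {A : Type*} [CommRing A] [Algebra (ZMod p) A]
    (f : (ZMod p)[X]) (x : A) : aeval (x ^ p) f = aeval x f ^ p := by
  rw [← expand_aeval, ZMod.expand_card, map_pow]

theorem BCHCode_one_three_eq_Ico (n : ℕ) (β : F) : BCHCode n β {1, 3} = BCHCode n β (Ico 1 5) := by
  ext c
  simp only [mem_BCHCode]
  refine ⟨fun h j hj ↦ ?_, fun h j hj ↦ h j ?_⟩
  · have h1 : aeval (β ^ 1) (ofFn n c) = 0 := h 1 (by simp)
    have h2 : aeval (β ^ 2) (ofFn n c) = 0 := by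
      rw [aeval_pow_prime, ← pow_one β, h1, zero_pow two_ne_zero]
    have h3 : aeval (β ^ 3) (ofFn n c) = 0 := h 3 (by simp)
    have h4 : aeval (β ^ 4) (ofFn n c) = 0 := by
      rw [show 4 = 2 * 2 from rfl, pow_mul, aeval_pow_prime, h2, zero_pow two_ne_zero]
    rw [Finset.mem_Ico] at hj
    obtain ⟨hj1, hj5⟩ := hj
    interval_cases j <;> assumption
  · revert j
    decide

theorem five_le_minDist_BCHCode_one_three (hβ : n ≤ orderOf β) (hC : BCHCode n β {1, 3} ≠ ⊥) :
    5 ≤ minDist (BCHCode n β {1, 3}) := by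
  rw [BCHCode_one_three_eq_Ico] at hC ⊢
  exact lt_minDist_BCHCode_Ico (b := 1) (m := 4) hβ hC

end BCHCode

section CyclotomicCosets

theorem natDegree_minpoly_eq_orderOf {p : ℕ} [Fact p.Prime] {L : Type*} [Field L]
    [Algebra (ZMod p) L] {x : L} (hx : p.Coprime (orderOf x)) :
    (minpoly (ZMod p) x).natDegree = orderOf (p : ZMod (orderOf x)) := by
  have hpos : 0 < orderOf x := by
    by_contra! h
    exact (Fact.out : p.Prime).ne_one (by simpa [Nat.le_zero.mp h] using hx)
  have hint : IsIntegral (ZMod p) x := .of_pow hpos (pow_orderOf_eq_one x ▸ isIntegral_one)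
  have hdvd : minpoly (ZMod p) x ∣ cyclotomic (orderOf x) (ZMod p) := by
    refine minpoly.dvd _ _ ?_
    rw [← eval_map_algebraMap, map_cyclotomic]
    exact (IsPrimitiveRoot.orderOf x).isRoot_cyclotomic hpos
  rw [natDegree_of_dvd_cyclotomic_of_irreducible (f := 1) (by simp) hx hdvd
    (minpoly.irreducible hint), ← orderOf_units]
  simp

theorem exists_pow_card_pow_eq_of_minpoly_eq {K L : Type*} [Field K] [Fintype K] [Field L]
    [Algebra K L] {x y : L} (hx : IsIntegral K x) (hxy : minpoly K x = minpoly K y) :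
    ∃ k : ℕ, x ^ Fintype.card K ^ k = y := by
  have hy : IsIntegral K y := by
    by_contra hy
    exact minpoly.ne_zero hx (hxy.trans (minpoly.eq_zero hy))
  let E := IntermediateField.adjoin K {x, y}
  have : FiniteDimensional K E := IntermediateField.finiteDimensional_adjoin fun z hz ↦ by
    rcases hz with rfl | rfl <;> assumption
  have : Finite E := Module.finite_of_finite K
  let x' : E := ⟨x, IntermediateField.subset_adjoin K _ (by simp)⟩
  let y' : E := ⟨y, IntermediateField.subset_adjoin K _ (by simp)⟩
  have hconj : IsConjRoot K y' x' := (isConjRoot_algHom_iff E.val).mp hxy.symm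
  obtain ⟨σ, hσ⟩ := isConjRoot_iff_exists_algEquiv.mp hconj
  obtain ⟨k, rfl⟩ := (FiniteField.bijective_frobeniusAlgEquivOfAlgebraic_pow K E).surjective σ
  refine ⟨k, ?_⟩
  rw [AlgEquiv.coe_pow, FiniteField.coe_frobeniusAlgEquivOfAlgebraic_iterate] at hσ
  exact congrArg Subtype.val hσ

theorem two_pow_eq_neg_one (t : ℕ) : (2 : ZMod (2 ^ t + 1)) ^ t = -1 :=
  eq_neg_of_add_eq_zero_left (by exact_mod_cast ZMod.natCast_self (2 ^ t + 1))

theorem orderOf_two_of_two_pow_add_one_dvd {t m : ℕ} (ht : t ≠ 0) (hm : 2 ^ t + 1 ∣ m)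
    (hm' : m ∣ 2 ^ (2 * t) - 1) : orderOf (2 : ZMod m) = 2 * t := by
  have two_pow_eq_one_iff (d : ℕ) : (2 : ZMod m) ^ d = 1 ↔ m ∣ 2 ^ d - 1 := by
    rw [← ZMod.natCast_eq_zero_iff, Nat.cast_sub Nat.one_le_two_pow, sub_eq_zero]
    push_cast
    rfl
  obtain ⟨k, hk⟩ := orderOf_dvd_of_pow_eq_one ((two_pow_eq_one_iff _).mpr hm')
  by_contra hne
  set d := orderOf (2 : ZMod m)
  have hd0 : d ≠ 0 := by rintro h; simp [h, ht] at hk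
  have hdt : d ≤ t := by
    have : k ≠ 0 := by rintro rfl; omega
    have : k ≠ 1 := by rintro rfl; omega
    nlinarith [show 2 ≤ k by omega]
  have hdvd : 2 ^ t + 1 ∣ 2 ^ d - 1 :=
    hm.trans ((two_pow_eq_one_iff d).mp (pow_orderOf_eq_one _))
  have hlt : 2 ^ d ≤ 2 ^ t := Nat.pow_le_pow_right two_pos hdt
  have hpos : 1 < 2 ^ d := Nat.one_lt_two_pow hd0
  have := Nat.le_of_dvd (by omega) hdvd
  omega

theorem two_pow_ne_natCast_of_odd {t a : ℕ} (ha : Odd a) (ha1 : 1 < a) (hat : a ≤ 2 ^ (t - 1))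
    (k : ℕ) : (2 : ZMod (2 ^ t + 1)) ^ k ≠ a := by
  intro h
  have ht : t ≠ 0 := by rintro rfl; simp at hat; omega
  have h2t : 2 ^ t = 2 * 2 ^ (t - 1) := (mul_pow_sub_one ht 2).symm
  have hr : 2 ^ (k % t) ≤ 2 ^ (t - 1) :=
    Nat.pow_le_pow_right two_pos (Nat.le_sub_one_of_lt (Nat.mod_lt k (Nat.pos_of_ne_zero ht)))
  have hk : (-1) ^ (k / t) * 2 ^ (k % t) = (a : ZMod (2 ^ t + 1)) := by
    rw [← h, ← two_pow_eq_neg_one, ← pow_mul, ← pow_add, Nat.div_add_mod]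
  rcases neg_one_pow_eq_or (ZMod (2 ^ t + 1)) (k / t) with hsign | hsign
  · have hmod : 2 ^ (k % t) ≡ a [MOD 2 ^ t + 1] := by
      rw [← ZMod.natCast_eq_natCast_iff, ← hk, hsign]
      simp
    have heq : 2 ^ (k % t) = a := hmod.eq_of_lt_of_lt (by omega) (by omega)
    rcases Nat.eq_zero_or_pos (k % t) with h0 | hpos
    · rw [h0, pow_zero] at heq
      omega
    · exact Nat.not_odd_iff_even.mpr (heq ▸ (even_two.pow_of_ne_zero hpos.ne')) ha
  · have hdvd : 2 ^ t + 1 ∣ 2 ^ (k % t) + a := by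
      rw [← ZMod.natCast_eq_zero_iff]
      push_cast
      rw [← hk, hsign]
      ring
    have := Nat.le_of_dvd (by positivity) hdvd
    omega

theorem coprime_two_pow_add_one_three {t : ℕ} (ht : Even t) : (2 ^ t + 1).Coprime 3 := by
  obtain ⟨u, rfl⟩ := ht
  rw [Nat.coprime_comm, Nat.prime_three.coprime_iff_not_dvd, ← two_mul, pow_mul,
    Nat.dvd_iff_mod_eq_zero, Nat.add_mod, Nat.pow_mod]
  simp

theorem dvd_orderOf_pow_of_coprime {M : Type*} [Monoid M] {x : M} {d k : ℕ}
    (hd : d ∣ orderOf x) (hdk : d.Coprime k) : d ∣ orderOf (x ^ k) :=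
  hdk.dvd_of_dvd_mul_left <| hd.trans <| orderOf_dvd_of_pow_eq_one <| by
    rw [pow_mul, pow_orderOf_eq_one]

variable {t : ℕ}

theorem natDegree_minpoly_of_two_pow_add_one_dvd {L : Type*} [Field L] [Algebra (ZMod 2) L]
    {x : L} (ht : t ≠ 0) (hx : 2 ^ t + 1 ∣ orderOf x) (hx' : orderOf x ∣ 2 ^ (2 * t) - 1) :
    (minpoly (ZMod 2) x).natDegree = 2 * t := by
  have hodd : Nat.Coprime 2 (2 ^ (2 * t) - 1) :=
    Nat.coprime_two_left.mpr (Nat.Even.sub_odd Nat.one_le_two_pow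
      (even_two.pow_of_ne_zero (by omega)) odd_one)
  rw [natDegree_minpoly_eq_orderOf (hodd.coprime_dvd_right hx')]
  exact orderOf_two_of_two_pow_add_one_dvd ht hx hx'

theorem minpoly_pow_ne_minpoly {L : Type*} [Field L] [Algebra (ZMod 2) L] {x : L} {a : ℕ}
    (hx0 : orderOf x ≠ 0) (hx : 2 ^ t + 1 ∣ orderOf x) (ha : Odd a) (ha1 : 1 < a)
    (hat : a ≤ 2 ^ (t - 1)) : minpoly (ZMod 2) x ≠ minpoly (ZMod 2) (x ^ a) := by
  intro h
  have hfin : IsOfFinOrder x := orderOf_pos_iff.mp (Nat.pos_of_ne_zero hx0)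
  have hint : IsIntegral (ZMod 2) x :=
    .of_pow hfin.orderOf_pos (pow_orderOf_eq_one x ▸ isIntegral_one)
  obtain ⟨k, hk⟩ := exists_pow_card_pow_eq_of_minpoly_eq hint h
  rw [ZMod.card, hfin.pow_eq_pow_iff_modEq] at hk
  refine two_pow_ne_natCast_of_odd ha ha1 hat k ?_
  exact_mod_cast (ZMod.natCast_eq_natCast_iff _ _ _).mpr (hk.of_dvd hx)

theorem finrank_BCHCode_one_three {F : Type} [Field F] [Algebra (ZMod 2) F] {n : ℕ} {β : F}
    (ht : Even t) (ht3 : 3 ≤ t) (hn : 2 ^ t + 1 ∣ n) (hn' : n ∣ 2 ^ (2 * t) - 1)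
    (hβ : orderOf β = n) :
    Module.finrank (ZMod 2) (BCHCode n β {1, 3}) + 4 * t = n := by
  have hn0 : n ≠ 0 := by
    rintro rfl
    have := Nat.one_lt_two_pow (n := 2 * t) (by omega)
    omega
  have hβ3 : 2 ^ t + 1 ∣ orderOf (β ^ 3) :=
    dvd_orderOf_pow_of_coprime (hβ ▸ hn) (coprime_two_pow_add_one_three ht)
  have hne : minpoly (ZMod 2) β ≠ minpoly (ZMod 2) (β ^ 3) :=
    minpoly_pow_ne_minpoly (hβ ▸ hn0) (hβ ▸ hn) (by decide) (by norm_num)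
      ((show 3 ≤ 2 ^ 2 by norm_num).trans (Nat.pow_le_pow_right two_pos (by omega)))
  have hdim := finrank_BCHCode_add_sum_natDegree_minpoly (J := {1, 3}) hn0
    (hβ ▸ pow_orderOf_eq_one β) (by simpa [Set.InjOn, hne.symm] using hne)
  have hdeg1 := natDegree_minpoly_of_two_pow_add_one_dvd (by omega) (hβ ▸ hn) (hβ ▸ hn')
  have hdeg3 := natDegree_minpoly_of_two_pow_add_one_dvd (by omega) hβ3
    ((orderOf_pow_dvd 3).trans (hβ ▸ hn'))
  rw [Finset.sum_pair (by norm_num), pow_one, hdeg1, hdeg3] at hdim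
  omega

end CyclotomicCosets

section Parameters

theorem add_one_mul_sq_add_one_mul_sub_one (q : ℕ) :
    (q + 1) * ((q ^ 2 + 1) * (q - 1)) = q ^ 4 - 1 := by
  rcases q with _ | q
  · simp
  · rw [Nat.add_sub_cancel]
    refine (Nat.sub_eq_of_eq_add ?_).symm
    ring

theorem orderOf_pow_add_one {M : Type*} [Monoid M] {x : M} {q : ℕ}
    (hx : orderOf x = q ^ 4 - 1) : orderOf (x ^ (q + 1)) = (q ^ 2 + 1) * (q - 1) := by
  rw [← add_one_mul_sq_add_one_mul_sub_one] at hx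
  rw [orderOf_pow_of_dvd q.succ_ne_zero (hx ▸ dvd_mul_right _ _), hx,
    Nat.mul_div_cancel_left _ q.succ_pos]

theorem two_mul_pow_eight_lt_choose_three {q : ℕ} (hq : 16 ≤ q) :
    2 * q ^ 8 < ((q ^ 2 + 1) * (q - 1) + 1).choose 3 := by
  obtain ⟨p, rfl⟩ : ∃ p, q = p + 1 := ⟨q - 1, by omega⟩
  rw [Nat.add_sub_cancel]
  set N := ((p + 1) ^ 2 + 1) * p + 1 with hN
  have hpN : (p + 1) ^ 2 * p ≤ N + 1 - 3 := by
    have : N = (p + 1) ^ 2 * p + p + 1 := by rw [hN]; ring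
    omega
  have hsq : 12 * (p + 1) ^ 2 < p ^ 3 := by nlinarith
  have : 6 * (2 * (p + 1) ^ 8) < 6 * N.choose 3 := calc
    6 * (2 * (p + 1) ^ 8) = (p + 1) ^ 6 * (12 * (p + 1) ^ 2) := by ring
    _ < (p + 1) ^ 6 * p ^ 3 := by gcongr
    _ = ((p + 1) ^ 2 * p) ^ 3 := by ring
    _ ≤ (N + 1 - 3) ^ 3 := Nat.pow_le_pow_left hpN 3
    _ ≤ N.descFactorial 3 := Nat.pow_sub_le_descFactorial N 3
    _ = 6 * N.choose 3 := Nat.descFactorial_eq_factorial_mul_choose N 3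
  omega

end Parameters

theorem stmt_8_general (s : ℕ) (hs : 4 ≤ s) (n : ℕ) (hn : n = (2 ^ (2 * s) + 1) * (2 ^ s - 1))
    {F : Type} [Field F] [Algebra (ZMod 2) F] (β : F) (hβ : orderOf β = n) :
    Module.finrank (ZMod 2) (extendedCode (BCHCode n β {1, 3})) = n - 8 * s ∧
    minDist (extendedCode (BCHCode n β {1, 3})) = 6 ∧
    ∀ D : Submodule (ZMod 2) (Fin (n + 1) → ZMod 2),
      Module.finrank (ZMod 2) D = n - 8 * s → minDist D ≤ 6 := by
  have hq : n = ((2 ^ s) ^ 2 + 1) * (2 ^ s - 1) := by rw [hn, mul_comm 2 s, pow_mul]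
  have hchoose : 2 ^ (8 * s + 1) < (n + 1).choose 3 := by
    rw [hq, pow_succ', mul_comm 8 s, pow_mul]
    exact two_mul_pow_eight_lt_choose_three (Nat.pow_le_pow_right two_pos hs)
  have h8s : 8 * s < n := by
    have := (Nat.pow_lt_pow_iff_right one_lt_two).mp (hchoose.trans_le (Nat.choose_le_two_pow _ 3))
    omega
  have hdvd : n ∣ 2 ^ (2 * (2 * s)) - 1 := by
    rw [show 2 * (2 * s) = s * 4 by ring, pow_mul, hq, ← add_one_mul_sq_add_one_mul_sub_one]
    exact dvd_mul_left _ _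
  have hdim := finrank_BCHCode_one_three (even_two_mul s) (by omega)
    (hn ▸ dvd_mul_right _ _) hdvd hβ
  have hextdim : Module.finrank (ZMod 2) (extendedCode (BCHCode n β {1, 3})) = n - 8 * s := by
    rw [finrank_extendedCode]
    omega
  have hoptimal (D : Submodule (ZMod 2) (Fin (n + 1) → ZMod 2))
      (hD : Module.finrank (ZMod 2) D = n - 8 * s) : minDist D ≤ 6 := by
    refine sphere_packing_bound (t := 3) D ?_
    rw [hD, show n + 1 - (n - 8 * s) = 8 * s + 1 by omega]
    exact hchoose.trans_le
      (Finset.single_le_sum (fun _ _ ↦ Nat.zero_le _) (Finset.self_mem_range_succ 3))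
  refine ⟨hextdim, (hoptimal _ hextdim).antisymm ?_, hoptimal⟩
  have hne : BCHCode n β {1, 3} ≠ ⊥ := fun h ↦ by
    rw [h, finrank_bot] at hdim
    omega
  exact succ_le_minDist_extendedCode hne (by decide) (five_le_minDist_BCHCode_one_three hβ.ge hne)

theorem stmt_8 (s : ℕ) (hs : 4 ≤ s) (n : ℕ) (hn : n = (2 ^ (2 * s) + 1) * (2 ^ s - 1))
    (α : GaloisField 2 (4 * s)) (hα : orderOf α = 2 ^ (4 * s) - 1)
    (β : GaloisField 2 (4 * s)) (hβ : β = α ^ (2 ^ s + 1)) :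
    Module.finrank (ZMod 2) (extendedCode (BCHCode n β {1, 3})) = n - 8 * s ∧
    minDist (extendedCode (BCHCode n β {1, 3})) = 6 ∧
    ∀ D : Submodule (ZMod 2) (Fin (n + 1) → ZMod 2),
      Module.finrank (ZMod 2) D = n - 8 * s → minDist D ≤ 6 := by
  refine stmt_8_general s hs n hn β ?_
  rw [hβ, hn, mul_comm 2 s, pow_mul]
  exact orderOf_pow_add_one (by rw [hα, mul_comm, pow_mul])
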